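/- arXiv:2508.03074 — 10 statements merged into one kernel-verified Lean document; each statement's English description precedes it below -/
import Mathlib

section
/- Let I_k = ∫₀^∞ λ^k e^{-λ} e^{-λ²/2} dλ for a natural number k. For every integer k ≥ 2, I_{k+1} ≤ √(3(k+1)·log(k+1)) · I_k + 1. -/
/-!
Integrating the derivative of `x ^ (k + 1) * e^{-x} * e^{-x² / 2}` over `(0, ∞)` gives the
recurrence `I (k + 2) + I (k + 1) = (k + 1) * I k`, hence `I (k + 2) ≤ (k + 1) * I k`. Together with
the Cauchy–Schwarz inequality `I (k + 1) ^ 2 ≤ I k * I (k + 2)` this yields the sharper bound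
`I (k + 1) ≤ √(k + 1) * I k`, and `3 * log (k + 1) ≥ 1` as soon as `k ≥ 1`.
-/

open MeasureTheory

/-- `I k = ∫₀^∞ λ^k e^{-λ} e^{-λ²/2} dλ`. -/
noncomputable def I (k : ℕ) : ℝ :=
  ∫ x in Set.Ioi (0 : ℝ), x ^ k * Real.exp (-x) * Real.exp (-x ^ 2 / 2)

open Filter Set Topology

theorem sq_integral_mul_le_integral_mul_integral_sq_mul {α : Type*} [MeasurableSpace α]
    {μ : Measure α} {f w : α → ℝ} (hw_nonneg : 0 ≤ᵐ[μ] w)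
    (hw : Integrable w μ) (hfw : Integrable (fun x ↦ f x * w x) μ)
    (hf2w : Integrable (fun x ↦ f x ^ 2 * w x) μ) :
    (∫ x, f x * w x ∂μ) ^ 2 ≤ (∫ x, w x ∂μ) * ∫ x, f x ^ 2 * w x ∂μ := by
  have quadratic_nonneg (t : ℝ) : 0 ≤ (∫ x, w x ∂μ) * (t * t) +
      (2 * ∫ x, f x * w x ∂μ) * t + ∫ x, f x ^ 2 * w x ∂μ := by
    calc 0 ≤ ∫ x, (t + f x) ^ 2 * w x ∂μ :=
          integral_nonneg_of_ae (hw_nonneg.mono fun x hx ↦ mul_nonneg (sq_nonneg _) hx)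
      _ = ∫ x, (t * t) * w x + (2 * t) * (f x * w x) + f x ^ 2 * w x ∂μ := by
          congr with x
          ring
      _ = _ := by
          rw [integral_add ((hw.const_mul _).fun_add (hfw.const_mul _)) hf2w,
            integral_add (hw.const_mul _) (hfw.const_mul _), integral_const_mul,
            integral_const_mul]
          ring
  have discrim_nonpos := discrim_le_zero quadratic_nonneg
  rw [discrim] at discrim_nonpos
  linarith

/-- The integrand of `I k`, extended to the whole real line. -/
noncomputable def momentIntegrand (k : ℕ) (x : ℝ) : ℝ :=
  x ^ k * Real.exp (-x) * Real.exp (-x ^ 2 / 2)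

theorem I_eq_integral_momentIntegrand (k : ℕ) : I k = ∫ x in Ioi 0, momentIntegrand k x := rfl

theorem momentIntegrand_add (j k : ℕ) (x : ℝ) :
    momentIntegrand (j + k) x = x ^ k * momentIntegrand j x := by
  unfold momentIntegrand
  ring

theorem continuous_momentIntegrand (k : ℕ) : Continuous (momentIntegrand k) := by
  unfold momentIntegrand
  fun_prop

theorem momentIntegrand_nonneg (k : ℕ) {x : ℝ} (hx : 0 ≤ x) : 0 ≤ momentIntegrand k x := by
  unfold momentIntegrand
  positivity

theorem momentIntegrand_le_pow_mul_exp_neg (k : ℕ) {x : ℝ} (hx : 0 ≤ x) :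
    momentIntegrand k x ≤ x ^ k * Real.exp (-x) :=
  mul_le_of_le_one_right (by positivity) (Real.exp_le_one_iff.2 (by linarith [sq_nonneg x]))

theorem integrableOn_momentIntegrand (k : ℕ) : IntegrableOn (momentIntegrand k) (Ioi 0) := by
  have gamma_integrable : IntegrableOn (fun x : ℝ ↦ x ^ k * Real.exp (-x)) (Ioi 0) := by
    simpa [mul_comm] using Real.GammaIntegral_convergent (s := k + 1) (by positivity)
  refine gamma_integrable.mono' (continuous_momentIntegrand k).aestronglyMeasurable ?_
  refine ae_restrict_of_forall_mem measurableSet_Ioi fun x hx ↦ ?_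
  rw [Real.norm_of_nonneg (momentIntegrand_nonneg k hx.le)]
  exact momentIntegrand_le_pow_mul_exp_neg k hx.le

theorem tendsto_momentIntegrand_atTop (k : ℕ) : Tendsto (momentIntegrand k) atTop (𝓝 0) :=
  squeeze_zero' ((eventually_ge_atTop 0).mono fun _ ↦ momentIntegrand_nonneg k)
    ((eventually_ge_atTop 0).mono fun _ ↦ momentIntegrand_le_pow_mul_exp_neg k)
    (Real.tendsto_pow_mul_exp_neg_atTop_nhds_zero k)

theorem hasDerivAt_momentIntegrand_succ (k : ℕ) (x : ℝ) :
    HasDerivAt (momentIntegrand (k + 1))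
      ((k + 1) * momentIntegrand k x - (momentIntegrand (k + 1) x + momentIntegrand (k + 2) x))
      x := by
  have hasDerivAt_exp_neg_sq := ((hasDerivAt_pow 2 x).fun_neg.div_const 2).exp
  refine (((hasDerivAt_pow (k + 1) x).fun_mul (hasDerivAt_neg x).exp).fun_mul
    hasDerivAt_exp_neg_sq).congr_deriv ?_
  simp only [momentIntegrand, Nat.add_sub_cancel]
  push_cast
  ring

theorem I_nonneg (k : ℕ) : 0 ≤ I k :=
  setIntegral_nonneg measurableSet_Ioi fun _ hx ↦ momentIntegrand_nonneg k hx.le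

theorem I_succ_add_I_add_two (k : ℕ) : I (k + 1) + I (k + 2) = (k + 1) * I k := by
  have integrable_k := (integrableOn_momentIntegrand k).const_mul (k + 1 : ℝ)
  have integrable_sum :=
    (integrableOn_momentIntegrand (k + 1)).fun_add (integrableOn_momentIntegrand (k + 2))
  have integral_deriv := integral_Ioi_of_hasDerivAt_of_tendsto'
    (fun x _ ↦ hasDerivAt_momentIntegrand_succ k x) (integrable_k.sub integrable_sum)
    (tendsto_momentIntegrand_atTop (k + 1))
  have momentIntegrand_zero : momentIntegrand (k + 1) 0 = 0 := by simp [momentIntegrand]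
  rw [integral_sub integrable_k integrable_sum, integral_const_mul,
    integral_add (integrableOn_momentIntegrand _) (integrableOn_momentIntegrand _),
    momentIntegrand_zero] at integral_deriv
  simp only [I_eq_integral_momentIntegrand]
  linarith

theorem I_succ_sq_le (k : ℕ) : I (k + 1) ^ 2 ≤ I k * I (k + 2) := by
  have integrable_mul (j : ℕ) : IntegrableOn (fun x ↦ x ^ j * momentIntegrand k x) (Ioi 0) := by
    simpa only [← momentIntegrand_add] using integrableOn_momentIntegrand (k + j)
  simpa only [I_eq_integral_momentIntegrand, momentIntegrand_add, pow_one] using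
    sq_integral_mul_le_integral_mul_integral_sq_mul
      (ae_restrict_of_forall_mem measurableSet_Ioi fun _ hx ↦ momentIntegrand_nonneg k hx.le)
      (integrableOn_momentIntegrand k)
      (by simpa only [pow_one, IntegrableOn] using integrable_mul 1) (integrable_mul 2)

theorem sqrt_le_sqrt_three_mul_mul_log {x : ℝ} (hx : 3 / 2 ≤ x) :
    √x ≤ √(3 * x * Real.log x) := by
  have one_third_le_log : 1 / 3 ≤ Real.log x := by
    have inv_le : x⁻¹ ≤ (3 / 2)⁻¹ := inv_anti₀ (by norm_num) hx
    linarith [Real.one_sub_inv_le_log_of_pos (show 0 < x by linarith)]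
  exact Real.sqrt_le_sqrt (by nlinarith)

theorem stmt0_general (k : ℕ) : I (k + 1) ≤ √(k + 1) * I k := by
  refine le_of_sq_le_sq ?_ (mul_nonneg (Real.sqrt_nonneg _) (I_nonneg k))
  calc I (k + 1) ^ 2 ≤ I k * I (k + 2) := I_succ_sq_le k
    _ ≤ I k * ((k + 1) * I k) := by
        gcongr
        · exact I_nonneg k
        · linarith [I_succ_add_I_add_two k, I_nonneg (k + 1)]
    _ = (√(k + 1) * I k) ^ 2 := by
        rw [mul_pow, Real.sq_sqrt (by positivity)]
        ring

/-- For every integer `k ≥ 2`, `I (k+1) ≤ √(3(k+1)·log(k+1)) · I k + 1`. -/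
theorem stmt0 (k : ℕ) (hk : 2 ≤ k) :
    I (k + 1) ≤ Real.sqrt (3 * ((k : ℝ) + 1) * Real.log ((k : ℝ) + 1)) * I k + 1 := by
  have two_le_k : (2 : ℝ) ≤ k := by exact_mod_cast hk
  have sqrt_le := sqrt_le_sqrt_three_mul_mul_log (x := k + 1) (by linarith)
  linarith [stmt0_general k, mul_le_mul_of_nonneg_right sqrt_le (I_nonneg k)]
end

section
/- Let K ≥ 2, let λ₁ > λ₂ > … > λ_K > 0 be real numbers, and let p₁, …, p_K > 0 with ∑_j p_j = 1. Define P₀(s) = (∑_{j=1}^K p_j λ_j^s e^{-2λ_j}) / (∑_{j=1}^K p_j λ_j^s e^{-λ_j}) for natural numbers s. Then P₀ is strictly decreasing: P₀(k+1) < P₀(k) for every natural number k. -/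
/-!
With the weights `wⱼ = pⱼ λⱼ ^ k e^{-λⱼ}` and the values `gⱼ = e^{-λⱼ}`, `P₀(k)` is the `w`-weighted
mean of `g`, and passing from `k` to `k + 1` multiplies the weights by `λ`. Since `g` decreases
where `λ` increases, this shifts mass towards smaller values of `g`. Quantitatively,
`P₀(k + 1) < P₀(k)` says that `λ` and `g` have negative covariance under `w`; up to a positive
factor this covariance is `∑ᵢ ∑ⱼ wᵢ wⱼ (λᵢ - λⱼ) (gᵢ - gⱼ)`, whose terms are nonpositive, and
negative whenever `λᵢ ≠ λⱼ` both carry mass.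
-/

open Finset

section Chebyshev

variable {ι R : Type*} {s : Finset ι}

lemma sum_sum_mul_mul_sub_mul_sub [CommRing R] (s : Finset ι) (w f g : ι → R) :
    ∑ i ∈ s, ∑ j ∈ s, w i * w j * ((f i - f j) * (g i - g j)) =
      2 * ((∑ i ∈ s, w i * f i * g i) * ∑ i ∈ s, w i -
        (∑ i ∈ s, w i * f i) * ∑ i ∈ s, w i * g i) := by
  have expand (i j : ι) : w i * w j * ((f i - f j) * (g i - g j)) =
      w i * f i * g i * w j + w i * (w j * f j * g j)
        - w i * f i * (w j * g j) - w i * g i * (w j * f j) := by ring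
  simp only [expand, sum_add_distrib, sum_sub_distrib, ← sum_mul_sum]
  ring

lemma sum_mul_mul_mul_sum_lt_of_antivaryOn [CommRing R] [LinearOrder R] [IsStrictOrderedRing R]
    {w f g : ι → R} (hw : ∀ i ∈ s, 0 ≤ w i) (hfg : AntivaryOn f g s)
    {a b : ι} (ha : a ∈ s) (hb : b ∈ s) (hwa : 0 < w a) (hwb : 0 < w b)
    (hf : f a < f b) (hg : g b < g a) :
    (∑ i ∈ s, w i * f i * g i) * ∑ i ∈ s, w i <
      (∑ i ∈ s, w i * f i) * ∑ i ∈ s, w i * g i := by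
  have term_nonpos : ∀ i ∈ s, ∀ j ∈ s, w i * w j * ((f i - f j) * (g i - g j)) ≤ 0 :=
    fun i hi j hj => mul_nonpos_of_nonneg_of_nonpos (mul_nonneg (hw i hi) (hw j hj))
      (antivaryOn_iff_forall_mul_nonpos.1 hfg hj hi)
  have term_neg : w a * w b * ((f a - f b) * (g a - g b)) < 0 :=
    mul_neg_of_pos_of_neg (mul_pos hwa hwb)
      (mul_neg_of_neg_of_pos (sub_neg.2 hf) (sub_pos.2 hg))
  have double_sum_neg : ∑ i ∈ s, ∑ j ∈ s, w i * w j * ((f i - f j) * (g i - g j)) < 0 :=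
    sum_neg' (fun i hi => sum_nonpos (term_nonpos i hi))
      ⟨a, ha, sum_neg' (term_nonpos a ha) ⟨b, hb, term_neg⟩⟩
  rw [sum_sum_mul_mul_sub_mul_sub] at double_sum_neg
  linarith

variable [Field R] [LinearOrder R] [IsStrictOrderedRing R]

lemma sum_mul_mul_div_sum_mul_lt_of_antivaryOn {w f g : ι → R} (hw : ∀ i ∈ s, 0 ≤ w i)
    (hf_pos : ∀ i ∈ s, 0 < f i) (hfg : AntivaryOn f g s)
    {a b : ι} (ha : a ∈ s) (hb : b ∈ s) (hwa : 0 < w a) (hwb : 0 < w b)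
    (hf : f a < f b) (hg : g b < g a) :
    (∑ i ∈ s, w i * f i * g i) / ∑ i ∈ s, w i * f i <
      (∑ i ∈ s, w i * g i) / ∑ i ∈ s, w i := by
  have sum_w_pos : 0 < ∑ i ∈ s, w i := sum_pos' hw ⟨a, ha, hwa⟩
  have sum_wf_pos : 0 < ∑ i ∈ s, w i * f i :=
    sum_pos' (fun i hi => mul_nonneg (hw i hi) (hf_pos i hi).le)
      ⟨a, ha, mul_pos hwa (hf_pos a ha)⟩
  rw [div_lt_div_iff₀ sum_wf_pos sum_w_pos, mul_comm (∑ i ∈ s, w i * g i)]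
  exact sum_mul_mul_mul_sum_lt_of_antivaryOn hw hfg ha hb hwa hwb hf hg

lemma strictAnti_sum_mul_pow_mul_div_sum_mul_pow {w f g : ι → R} (hw : ∀ i ∈ s, 0 ≤ w i)
    (hf_pos : ∀ i ∈ s, 0 < f i) (hfg : AntivaryOn f g s)
    {a b : ι} (ha : a ∈ s) (hb : b ∈ s) (hwa : 0 < w a) (hwb : 0 < w b)
    (hf : f a < f b) (hg : g b < g a) :
    StrictAnti fun n : ℕ =>
      (∑ i ∈ s, w i * f i ^ n * g i) / ∑ i ∈ s, w i * f i ^ n := by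
  refine strictAnti_nat_of_succ_lt fun n => ?_
  simp only [pow_succ, ← mul_assoc]
  exact sum_mul_mul_div_sum_mul_lt_of_antivaryOn
    (fun i hi => mul_nonneg (hw i hi) (pow_pos (hf_pos i hi) n).le) hf_pos hfg ha hb
    (mul_pos hwa (pow_pos (hf_pos a ha) n)) (mul_pos hwb (pow_pos (hf_pos b hb) n)) hf hg

end Chebyshev

theorem stmt4_general {ι : Type*} [Fintype ι] {l p : ι → ℝ} (hl : ∀ i, 0 < l i)
    (hp : ∀ i, 0 ≤ p i) {a b : ι} (hpa : 0 < p a) (hpb : 0 < p b) (hab : l a < l b) :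
    StrictAnti fun k : ℕ =>
      (∑ j, p j * l j ^ k * Real.exp (-(2 * l j))) /
        ∑ j, p j * l j ^ k * Real.exp (-(l j)) := by
  have exp_neg_strictAnti : StrictAnti fun x : ℝ => Real.exp (-x) :=
    fun _ _ hxy => Real.exp_lt_exp.2 (neg_lt_neg hxy)
  have antivary : Antivary l fun j => Real.exp (-(l j)) :=
    ((monovary_self l).comp_antitone_left exp_neg_strictAnti.antitone).symm
  have num_term (j : ι) (k : ℕ) : p j * l j ^ k * Real.exp (-(2 * l j)) =
      p j * Real.exp (-(l j)) * l j ^ k * Real.exp (-(l j)) := by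
    rw [two_mul, neg_add, Real.exp_add]
    ring
  have den_term (j : ι) (k : ℕ) : p j * l j ^ k * Real.exp (-(l j)) =
      p j * Real.exp (-(l j)) * l j ^ k := mul_right_comm _ _ _
  simp only [num_term, den_term]
  exact strictAnti_sum_mul_pow_mul_div_sum_mul_pow
    (fun j _ => mul_nonneg (hp j) (Real.exp_pos _).le) (fun j _ => hl j) (antivary.antivaryOn _)
    (mem_univ a) (mem_univ b) (mul_pos hpa (Real.exp_pos _)) (mul_pos hpb (Real.exp_pos _))
    hab (exp_neg_strictAnti hab)

/-- The posterior probability of zero new demand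
`P₀(s) = (∑ⱼ pⱼ λⱼ^s e^{-2λⱼ}) / (∑ⱼ pⱼ λⱼ^s e^{-λⱼ})` is strictly decreasing in `s`. -/
theorem stmt4 (K : ℕ) (hK : 2 ≤ K) (l p : Fin K → ℝ)
    (hl : StrictAnti l) (hlpos : ∀ i, 0 < l i) (hp : ∀ i, 0 < p i)
    (hsum : ∑ i, p i = 1) :
    ∀ k : ℕ,
      (∑ j, p j * l j ^ (k + 1) * Real.exp (-(2 * l j))) /
        (∑ j, p j * l j ^ (k + 1) * Real.exp (-(l j))) <
      (∑ j, p j * l j ^ k * Real.exp (-(2 * l j))) /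
        (∑ j, p j * l j ^ k * Real.exp (-(l j))) := by
  have l_one_lt_l_zero : l ⟨1, hK⟩ < l ⟨0, by lia⟩ := hl (Fin.mk_lt_mk.2 one_pos)
  exact fun k => stmt4_general hlpos (fun i => (hp i).le) (hp _) (hp _) l_one_lt_l_zero
    k.lt_succ_self
end

section
/- Let K ≥ 2, let λ₁ > λ₂ > … > λ_K > 0 be real numbers, let p₁, …, p_K > 0 with ∑_j p_j = 1, and set q = λ₂/λ₁ ∈ (0,1). Define P₀(s) = (∑_{j=1}^K p_j λ_j^s e^{-2λ_j}) / (∑_{j=1}^K p_j λ_j^s e^{-λ_j}). Then lim_{s→∞} q^{-s} · (P₀(s) − e^{-λ₁}) = (e^{λ₁−λ₂} − 1) · e^{-λ₂} · p₂/p₁. -/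
/-!
Weighting the points `λⱼ` by `λⱼ ^ s * pⱼ * e^{-λⱼ}`, the ratio `P₀(s)` is the average of the values
`e^{-λⱼ}`. Subtracting `e^{-λ₁}` from the average is the same as subtracting it from every value,
which kills the `j = 1` term of the numerator. The numerator is then governed by `λ₂ ^ s`, whereas
the total weight is governed by `λ₁ ^ s`, and the limit is the quotient of the two leading
coefficients.
-/

open Filter Finset Real Topology

theorem centerMass_sub_const {ι R E : Type*} [Field R] [AddCommGroup E] [Module R E]
    {t : Finset ι} {w : ι → R} (hw : ∑ j ∈ t, w j ≠ 0) (f : ι → E) (x : E) :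
    t.centerMass w f - x = t.centerMass w fun j ↦ f j - x := by
  simp only [centerMass, smul_sub, sum_sub_distrib, ← sum_smul, inv_smul_smul₀ hw]

section DominantTerm

variable {ι 𝕜 E : Type*} [NormedField 𝕜] [SeminormedAddCommGroup E] [NormedSpace 𝕜 E]
  {t : Finset ι} {l : ι → 𝕜}

theorem tendsto_inv_pow_smul_sum_pow_smul {c : ι → E} {i : ι} (hi : i ∈ t) (hli : l i ≠ 0)
    (hdom : ∀ j ∈ t, j ≠ i → c j ≠ 0 → ‖l j‖ < ‖l i‖) :
    Tendsto (fun s : ℕ ↦ (l i ^ s)⁻¹ • ∑ j ∈ t, l j ^ s • c j) atTop (𝓝 (c i)) := by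
  classical
  have hterm : ∀ j ∈ t,
      Tendsto (fun s : ℕ ↦ (l j / l i) ^ s • c j) atTop (𝓝 (if j = i then c j else 0)) := by
    intro j hj
    rcases eq_or_ne j i with rfl | hji
    · simp [hli, tendsto_const_nhds]
    rcases eq_or_ne (c j) 0 with hcj | hcj
    · simp [hcj, tendsto_const_nhds]
    have hratio : ‖l j / l i‖ < 1 := by
      rw [norm_div]
      exact (div_lt_one (norm_pos_iff.2 hli)).2 (hdom j hj hji hcj)
    simpa [hji] using (tendsto_pow_atTop_nhds_zero_of_norm_lt_one hratio).smul_const (c j)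
  simpa [smul_sum, smul_smul, mul_pow, div_eq_inv_mul, hi] using tendsto_finsetSum t hterm

theorem tendsto_centerMass_pow_mul_sub {w : ι → 𝕜} {a b : ι} (ha : a ∈ t) (hb : b ∈ t)
    (hwa : w a ≠ 0) (hlb : l b ≠ 0) (hba : ‖l b‖ < ‖l a‖)
    (hdom : ∀ j ∈ t, j ≠ a → j ≠ b → ‖l j‖ < ‖l b‖) (f : ι → E) :
    Tendsto
      (fun s : ℕ ↦ ((l b / l a) ^ s)⁻¹ • (t.centerMass (fun j ↦ l j ^ s * w j) f - f a))
      atTop (𝓝 ((w b / w a) • (f b - f a))) := by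
  have hla : l a ≠ 0 := norm_pos_iff.1 ((norm_nonneg _).trans_lt hba)
  have hweight : Tendsto (fun s : ℕ ↦ (l a ^ s)⁻¹ * ∑ j ∈ t, l j ^ s * w j) atTop (𝓝 (w a)) := by
    refine tendsto_inv_pow_smul_sum_pow_smul ha hla fun j hj hja _ ↦ ?_
    rcases eq_or_ne j b with rfl | hjb
    exacts [hba, (hdom j hj hja hjb).trans hba]
  have hnumerator : Tendsto (fun s : ℕ ↦ (l b ^ s)⁻¹ • ∑ j ∈ t, (l j ^ s * w j) • (f j - f a))
      atTop (𝓝 (w b • (f b - f a))) := by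
    simp only [mul_smul]
    refine tendsto_inv_pow_smul_sum_pow_smul (c := fun j ↦ w j • (f j - f a)) hb hlb
      fun j hj hjb hcj ↦ hdom j hj ?_ hjb
    rintro rfl
    simp at hcj
  rw [div_eq_inv_mul (w b), mul_smul]
  refine ((hweight.inv₀ hwa).smul hnumerator).congr' ?_
  filter_upwards [hweight.eventually_ne hwa] with s hs
  rw [centerMass_sub_const (right_ne_zero_of_mul hs), centerMass, smul_smul, smul_smul]
  congr 1
  simp only [div_pow, mul_inv, inv_div, inv_inv]
  ring

end DominantTerm

section ExponentialWeights

variable {ι : Type*}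

theorem sum_mul_exp_div_sum_mul_exp_eq_centerMass (t : Finset ι) (l u : ι → ℝ) :
    (∑ j ∈ t, u j * exp (-(2 * l j))) / ∑ j ∈ t, u j * exp (-l j) =
      t.centerMass (fun j ↦ u j * exp (-l j)) fun j ↦ exp (-l j) := by
  have hexp (x : ℝ) : exp (-(2 * x)) = exp (-x) * exp (-x) := by
    rw [← exp_add]
    ring_nf
  simp only [centerMass, smul_eq_mul, hexp, div_eq_inv_mul, mul_assoc]

theorem mul_exp_neg_div_mul_exp_neg_mul_sub (x y c d : ℝ) :
    d * exp (-y) / (c * exp (-x)) * (exp (-y) - exp (-x)) =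
      (exp (x - y) - 1) * exp (-y) * d / c := by
  have hxy : exp (x - y) = exp (-y) / exp (-x) := by
    rw [← exp_sub]
    ring_nf
  rw [hxy]
  field_simp

theorem stmt5_general [Fintype ι] {l p : ι → ℝ} {a b : ι} (hpa : p a ≠ 0) (hlb : l b ≠ 0)
    (hba : |l b| < |l a|) (hdom : ∀ j, j ≠ a → j ≠ b → |l j| < |l b|) :
    Tendsto
      (fun s : ℕ ↦
        ((∑ j, p j * l j ^ s * exp (-(2 * l j))) / (∑ j, p j * l j ^ s * exp (-l j)) -
          exp (-l a)) / (l b / l a) ^ s)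
      atTop (𝓝 ((exp (l a - l b) - 1) * exp (-l b) * p b / p a)) := by
  have hlim := tendsto_centerMass_pow_mul_sub (w := fun j ↦ p j * exp (-l j)) (mem_univ a)
    (mem_univ b) (mul_ne_zero hpa (exp_ne_zero _)) hlb hba (fun j _ ↦ hdom j) fun j ↦ exp (-l j)
  rw [smul_eq_mul, mul_exp_neg_div_mul_exp_neg_mul_sub] at hlim
  refine hlim.congr fun s ↦ ?_
  rw [sum_mul_exp_div_sum_mul_exp_eq_centerMass, smul_eq_mul, ← div_eq_inv_mul]
  simp only [mul_left_comm, mul_assoc]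

end ExponentialWeights

/-- With `q = λ₂/λ₁`, `lim_{s→∞} q^{-s}·(P₀(s) − e^{-λ₁}) = (e^{λ₁−λ₂} − 1)·e^{-λ₂}·p₂/p₁`. -/
theorem stmt5 (K : ℕ) (hK : 2 ≤ K) (l p : Fin K → ℝ)
    (hl : StrictAnti l) (hlpos : ∀ i, 0 < l i) (hp : ∀ i, 0 < p i)
    (hsum : ∑ i, p i = 1) :
    Filter.Tendsto
      (fun s : ℕ =>
        ((∑ j, p j * l j ^ s * Real.exp (-(2 * l j))) /
            (∑ j, p j * l j ^ s * Real.exp (-(l j))) -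
          Real.exp (-(l ⟨0, by omega⟩))) /
        (l ⟨1, by omega⟩ / l ⟨0, by omega⟩) ^ s)
      Filter.atTop
      (nhds ((Real.exp (l ⟨0, by omega⟩ - l ⟨1, by omega⟩) - 1) *
        Real.exp (-(l ⟨1, by omega⟩)) * p ⟨1, by omega⟩ / p ⟨0, by omega⟩)) := by
  have habs : StrictAnti fun i ↦ |l i| := by simpa only [abs_of_pos (hlpos _)] using hl
  exact stmt5_general (hp _).ne' (hlpos _).ne' (habs (by simp)) fun j h₀ h₁ ↦ habs (by grind)
end

section
/- Let K ≥ 2, let λ₁ > λ₂ > … > λ_K > 0 be real numbers, let p₁, …, p_K > 0 with ∑_j p_j = 1, and set q = λ₂/λ₁ ∈ (0,1). Define the posterior mean m(s) = (∑_{j=1}^K p_j λ_j^{s+1} e^{-λ_j}) / (∑_{j=1}^K p_j λ_j^s e^{-λ_j}). Then lim_{s→∞} q^{-s} · (λ₁ − m(s)) = e^{λ₁−λ₂} · (λ₁ − λ₂) · p₂/p₁. -/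
/-!
With `wⱼ = pⱼ e^{-λⱼ}`, one has `λ₁ - m(s) = ∑ⱼ wⱼ (λ₁ - λⱼ) λⱼ^s / ∑ⱼ wⱼ λⱼ^s`. The term `j = 1` of
the numerator vanishes, so the numerator grows like `w₂ (λ₁ - λ₂) λ₂^s`, while the denominator grows
like `w₁ λ₁^s`.
-/

open Filter Topology

/-- The `s`-th moment `∑ⱼ wⱼ xⱼ ^ s` of the finite measure with (possibly signed, unnormalised)
weights `w` at the points `x`. The posterior mean is a quotient of two consecutive moments. -/
def powerMoment {ι R : Type*} [Fintype ι] [Semiring R] (w x : ι → R) (s : ℕ) : R :=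
  ∑ j, w j * x j ^ s

section PowerMoment

variable {ι : Type*} [Fintype ι]

lemma mul_powerMoment_sub_powerMoment_succ {R : Type*} [CommRing R] (w x : ι → R) (a : R) (s : ℕ) :
    a * powerMoment w x s - powerMoment w x (s + 1) =
      powerMoment (fun j => w j * (a - x j)) x s := by
  simp only [powerMoment, Finset.mul_sum, ← Finset.sum_sub_distrib]
  exact Finset.sum_congr rfl fun j _ => by ring

variable {𝕜 : Type*} [NormedField 𝕜] {w x : ι → 𝕜} {i k : ι}

lemma tendsto_powerMoment_div_pow (hxi : x i ≠ 0)
    (hdom : ∀ j ≠ i, w j = 0 ∨ ‖x j‖ < ‖x i‖) :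
    Tendsto (fun s => powerMoment w x s / x i ^ s) atTop (𝓝 (w i)) := by
  classical
  have tendsto_term (j : ι) :
      Tendsto (fun s : ℕ => w j * (x j / x i) ^ s) atTop (𝓝 (if j = i then w j else 0)) := by
    rcases eq_or_ne j i with rfl | hji
    · simp [div_self hxi]
    · rw [if_neg hji]
      rcases hdom j hji with hw | hlt
      · simp [hw]
      · have hratio : ‖x j / x i‖ < 1 := by
          rwa [norm_div, div_lt_one (norm_pos_iff.2 hxi)]
        simpa using (tendsto_pow_atTop_nhds_zero_of_norm_lt_one hratio).const_mul (w j)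
  simpa [powerMoment, Finset.sum_div, div_pow, mul_div_assoc] using
    tendsto_finsetSum Finset.univ fun j _ => tendsto_term j

theorem tendsto_sub_powerMoment_succ_div_powerMoment (hwi : w i ≠ 0) (hxk : x k ≠ 0)
    (hki : ‖x k‖ < ‖x i‖) (hlt : ∀ j, j ≠ i → j ≠ k → ‖x j‖ < ‖x k‖) :
    Tendsto (fun s => (x i - powerMoment w x (s + 1) / powerMoment w x s) / (x k / x i) ^ s)
      atTop (𝓝 (w k * (x i - x k) / w i)) := by
  have hxi : x i ≠ 0 := norm_pos_iff.1 ((norm_nonneg _).trans_lt hki)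
  have hnum : Tendsto (fun s => powerMoment (fun j => w j * (x i - x j)) x s / x k ^ s) atTop
      (𝓝 (w k * (x i - x k))) := by
    refine tendsto_powerMoment_div_pow hxk fun j hjk => ?_
    rcases eq_or_ne j i with rfl | hji
    · exact Or.inl (by simp)
    · exact Or.inr (hlt j hji hjk)
  have hden : Tendsto (fun s => powerMoment w x s / x i ^ s) atTop (𝓝 (w i)) := by
    refine tendsto_powerMoment_div_pow hxi fun j hji => Or.inr ?_
    rcases eq_or_ne j k with rfl | hjk
    · exact hki
    · exact (hlt j hji hjk).trans hki
  refine (hnum.div hden hwi).congr' ?_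
  filter_upwards [hden.eventually_ne hwi] with s hs
  have hmoment : powerMoment w x s ≠ 0 := (div_ne_zero_iff.1 hs).1
  rw [Pi.div_apply, ← mul_powerMoment_sub_powerMoment_succ, div_pow]
  field_simp

end PowerMoment

theorem stmt6_general {ι : Type*} [Fintype ι] {l p : ι → ℝ} {i k : ι} (hpi : p i ≠ 0)
    (hlk : 0 < l k) (hki : l k < l i) (hlt : ∀ j, j ≠ i → j ≠ k → |l j| < l k) :
    Tendsto
      (fun s : ℕ =>
        (l i - (∑ j, p j * l j ^ (s + 1) * Real.exp (-(l j))) /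
          (∑ j, p j * l j ^ s * Real.exp (-(l j)))) / (l k / l i) ^ s)
      atTop (𝓝 (Real.exp (l i - l k) * (l i - l k) * p k / p i)) := by
  have hlimit : Real.exp (l i - l k) * (l i - l k) * p k / p i =
      p k * Real.exp (-(l k)) * (l i - l k) / (p i * Real.exp (-(l i))) := by
    rw [sub_eq_neg_add (l i) (l k), Real.exp_add, Real.exp_neg (l i)]
    field_simp
  simp only [hlimit, mul_right_comm (p _) (l _ ^ _)]
  have hnorm_lk : ‖l k‖ = l k := Real.norm_of_nonneg hlk.le
  refine tendsto_sub_powerMoment_succ_div_powerMoment (w := fun j => p j * Real.exp (-(l j)))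
    (mul_ne_zero hpi (Real.exp_ne_zero _)) hlk.ne' ?_ fun j hji hjk => ?_
  · rwa [hnorm_lk, Real.norm_of_nonneg (hlk.trans hki).le]
  · rw [hnorm_lk]
    exact hlt j hji hjk

/-- With `q = λ₂/λ₁` and posterior mean
`m(s) = (∑ⱼ pⱼ λⱼ^{s+1} e^{-λⱼ}) / (∑ⱼ pⱼ λⱼ^s e^{-λⱼ})`,
`lim_{s→∞} q^{-s}·(λ₁ − m(s)) = e^{λ₁−λ₂}·(λ₁ − λ₂)·p₂/p₁`. -/
theorem stmt6 (K : ℕ) (hK : 2 ≤ K) (l p : Fin K → ℝ)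
    (hl : StrictAnti l) (hlpos : ∀ i, 0 < l i) (hp : ∀ i, 0 < p i)
    (hsum : ∑ i, p i = 1) :
    Filter.Tendsto
      (fun s : ℕ =>
        (l ⟨0, by omega⟩ -
          (∑ j, p j * l j ^ (s + 1) * Real.exp (-(l j))) /
            (∑ j, p j * l j ^ s * Real.exp (-(l j)))) /
        (l ⟨1, by omega⟩ / l ⟨0, by omega⟩) ^ s)
      Filter.atTop
      (nhds (Real.exp (l ⟨0, by omega⟩ - l ⟨1, by omega⟩) *
        (l ⟨0, by omega⟩ - l ⟨1, by omega⟩) * p ⟨1, by omega⟩ / p ⟨0, by omega⟩)) := by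
  refine stmt6_general (hp _).ne' (hlpos _) (hl (by simp)) fun j hj0 hj1 => ?_
  rw [abs_of_pos (hlpos j)]
  refine hl (Fin.lt_def.2 ?_)
  grind
end

section
/- Let K ≥ 2, let λ₁ > λ₂ > … > λ_K > 0 be real numbers, let p₁, …, p_K > 0 with ∑_j p_j = 1, and set q = λ₂/λ₁ ∈ (0,1). Define the posterior mean m(s) = (∑_{j=1}^K p_j λ_j^{s+1} e^{-λ_j}) / (∑_{j=1}^K p_j λ_j^s e^{-λ_j}). Then lim_{s→∞} q^{-s} · (e^{-m(s)} − e^{-λ₁}) = (λ₁ − λ₂) · e^{-λ₂} · p₂/p₁. -/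
/-!
Write `wⱼ = pⱼ e^{-λⱼ}` and `M w s = ∑ⱼ wⱼ λⱼ^s`, so that the posterior mean is the moment ratio
`m(s) = M w (s + 1) / M w s`. Then `m(s) - λ₁ = M v s / M w s` with `vⱼ = wⱼ (λⱼ - λ₁)`. Since
`v₁ = 0`, the numerator is asymptotic to `v₂ λ₂^s` while the denominator is asymptotic to
`w₁ λ₁^s`, so `(m(s) - λ₁) / q^s → v₂ / w₁`. Applying a function differentiable at `λ₁` multiplies
this limit by its derivative there, which for `x ↦ e^{-x}` is `-e^{-λ₁}` and cancels the factor
`e^{-λ₁}` of `w₁`.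
-/

open Filter Topology

section DeltaMethod

variable {α 𝕜 : Type*} [NontriviallyNormedField 𝕜]

lemma tendsto_apply_sub_div_of_hasDerivAt {f : 𝕜 → 𝕜} {f' a c : 𝕜} {F : Filter α} {m r : α → 𝕜}
    (hf : HasDerivAt f f' a) (hm : Tendsto m F (𝓝 a))
    (hmr : Tendsto (fun s => (m s - a) / r s) F (𝓝 c)) :
    Tendsto (fun s => (f (m s) - f a) / r s) F (𝓝 (c * f')) := by
  have hsub : Tendsto (fun s => m s - a) F (𝓝 0) := tendsto_sub_nhds_zero_iff.2 hm
  have hscaled : Tendsto (fun s => (r s)⁻¹ • (m s - a)) F (𝓝 c) :=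
    hmr.congr fun s => div_eq_inv_mul _ _
  simpa [div_eq_inv_mul] using
    hf.hasFDerivAt.hasFDerivWithinAt.lim hsub (.of_forall fun _ => Set.mem_univ _) hscaled

end DeltaMethod

section Moments

variable {ι 𝕜 : Type*} [Fintype ι]

/-- The `s`-th moment of the (signed, not necessarily normalized) measure with mass `w j` at the
point `x j`. -/
def discreteMoment [Semiring 𝕜] (w x : ι → 𝕜) (s : ℕ) : 𝕜 :=
  ∑ j, w j * x j ^ s

/-- The ratio of consecutive moments. For `w j = p j * exp (-x j)` this is the posterior mean of a
Poisson rate with prior masses `p j` at `x j`, given the count `s`. It takes the value `0` where the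
`s`-th moment vanishes. -/
def momentRatio [Semifield 𝕜] (w x : ι → 𝕜) (s : ℕ) : 𝕜 :=
  discreteMoment w x (s + 1) / discreteMoment w x s

lemma momentRatio_sub [Field 𝕜] (w x : ι → 𝕜) (a : 𝕜) {s : ℕ} (hs : discreteMoment w x s ≠ 0) :
    momentRatio w x s - a =
      discreteMoment (fun j => w j * (x j - a)) x s / discreteMoment w x s := by
  rw [momentRatio, div_sub' hs]
  congr 1
  simp only [discreteMoment, Finset.sum_mul, ← Finset.sum_sub_distrib]
  exact Finset.sum_congr rfl fun j _ => by ring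

lemma tendsto_discreteMoment_div_pow [NormedField 𝕜] {w x : ι → 𝕜} {i : ι} (hi : x i ≠ 0)
    (hdom : ∀ j ≠ i, w j = 0 ∨ ‖x j‖ < ‖x i‖) :
    Tendsto (fun s => discreteMoment w x s / x i ^ s) atTop (𝓝 (w i)) := by
  classical
  have hterm (j : ι) :
      Tendsto (fun s : ℕ => w j * (x j / x i) ^ s) atTop (𝓝 (if j = i then w j else 0)) := by
    rcases eq_or_ne j i with rfl | hj
    · simp [div_self hi]
    rcases hdom j hj with hw | hx
    · simp [hw]
    · have hlt : ‖x j / x i‖ < 1 := by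
        rwa [norm_div, div_lt_one (norm_pos_iff.2 hi)]
      simpa [hj] using (tendsto_pow_atTop_nhds_zero_of_norm_lt_one hlt).const_mul (w j)
  have hsum := tendsto_finsetSum Finset.univ fun j _ => hterm j
  simpa [discreteMoment, Finset.sum_div, div_pow, mul_div_assoc] using hsum

section DominantPoints

variable {w x : ι → 𝕜} {i₀ i₁ : ι}

lemma tendsto_momentRatio [NormedField 𝕜] (hw : w i₀ ≠ 0) (hi₀ : x i₀ ≠ 0)
    (hdom : ∀ j ≠ i₀, ‖x j‖ < ‖x i₀‖) :
    Tendsto (momentRatio w x) atTop (𝓝 (x i₀)) := by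
  have hmoment : Tendsto (fun s => discreteMoment w x s / x i₀ ^ s) atTop (𝓝 (w i₀)) :=
    tendsto_discreteMoment_div_pow hi₀ fun j hj => .inr (hdom j hj)
  have hratio := ((hmoment.comp (tendsto_add_atTop_nat 1)).div hmoment hw).const_mul (x i₀)
  rw [div_self hw, mul_one] at hratio
  refine hratio.congr fun s => ?_
  simp only [Pi.div_apply, Function.comp_apply, momentRatio, pow_succ]
  field_simp

lemma tendsto_momentRatio_sub_div_pow [NormedField 𝕜] (hw : w i₀ ≠ 0) (hi₀ : x i₀ ≠ 0)
    (hi₁ : x i₁ ≠ 0) (hdom₀ : ∀ j ≠ i₀, ‖x j‖ < ‖x i₀‖)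
    (hdom₁ : ∀ j, j ≠ i₀ → j ≠ i₁ → ‖x j‖ < ‖x i₁‖) :
    Tendsto (fun s => (momentRatio w x s - x i₀) / (x i₁ / x i₀) ^ s) atTop
      (𝓝 (w i₁ * (x i₁ - x i₀) / w i₀)) := by
  have hden : Tendsto (fun s => discreteMoment w x s / x i₀ ^ s) atTop (𝓝 (w i₀)) :=
    tendsto_discreteMoment_div_pow hi₀ fun j hj₀ => .inr (hdom₀ j hj₀)
  have hnum : Tendsto (fun s => discreteMoment (fun j => w j * (x j - x i₀)) x s / x i₁ ^ s) atTop
      (𝓝 (w i₁ * (x i₁ - x i₀))) := by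
    refine tendsto_discreteMoment_div_pow hi₁ fun j hj₁ => ?_
    rcases eq_or_ne j i₀ with rfl | hj₀
    · exact .inl (by simp)
    · exact .inr (hdom₁ j hj₀ hj₁)
  refine (hnum.div hden hw).congr' ?_
  filter_upwards [hden.eventually_ne hw] with s hs
  have hmoment : discreteMoment w x s ≠ 0 := (div_ne_zero_iff.1 hs).1
  rw [Pi.div_apply, momentRatio_sub w x _ hmoment, div_pow, div_div_div_comm]

lemma tendsto_apply_momentRatio_sub_div_pow [NontriviallyNormedField 𝕜] {f : 𝕜 → 𝕜} {f' : 𝕜}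
    (hf : HasDerivAt f f' (x i₀)) (hw : w i₀ ≠ 0) (hi₁ : x i₁ ≠ 0) (hlt : ‖x i₁‖ < ‖x i₀‖)
    (hdom : ∀ j, j ≠ i₀ → j ≠ i₁ → ‖x j‖ < ‖x i₁‖) :
    Tendsto (fun s => (f (momentRatio w x s) - f (x i₀)) / (x i₁ / x i₀) ^ s) atTop
      (𝓝 (w i₁ * (x i₁ - x i₀) / w i₀ * f')) := by
  have hi₀ : x i₀ ≠ 0 := norm_pos_iff.1 ((norm_nonneg _).trans_lt hlt)
  have hdom₀ (j : ι) (hj₀ : j ≠ i₀) : ‖x j‖ < ‖x i₀‖ := by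
    rcases eq_or_ne j i₁ with rfl | hj₁
    · exact hlt
    · exact (hdom j hj₀ hj₁).trans hlt
  exact tendsto_apply_sub_div_of_hasDerivAt hf (tendsto_momentRatio hw hi₀ hdom₀)
    (tendsto_momentRatio_sub_div_pow hw hi₀ hi₁ hdom₀ hdom)

end DominantPoints

end Moments

lemma momentRatio_mul_exp_neg {ι : Type*} [Fintype ι] (p l : ι → ℝ) (s : ℕ) :
    momentRatio (fun j => p j * Real.exp (-l j)) l s =
      (∑ j, p j * l j ^ (s + 1) * Real.exp (-l j)) / ∑ j, p j * l j ^ s * Real.exp (-l j) := by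
  simp only [momentRatio, discreteMoment, mul_right_comm]

theorem stmt7_general {ι : Type*} [Fintype ι] {l p : ι → ℝ} {i₀ i₁ : ι} (hp : p i₀ ≠ 0)
    (hi₁ : l i₁ ≠ 0) (hlt : |l i₁| < |l i₀|) (hdom : ∀ j, j ≠ i₀ → j ≠ i₁ → |l j| < |l i₁|) :
    Tendsto
      (fun s : ℕ =>
        (Real.exp (-((∑ j, p j * l j ^ (s + 1) * Real.exp (-l j)) /
            (∑ j, p j * l j ^ s * Real.exp (-l j)))) - Real.exp (-l i₀)) / (l i₁ / l i₀) ^ s)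
      atTop (𝓝 ((l i₀ - l i₁) * Real.exp (-l i₁) * p i₁ / p i₀)) := by
  have hderiv : HasDerivAt (fun t => Real.exp (-t)) (-Real.exp (-l i₀)) (l i₀) := by
    simpa using (hasDerivAt_neg (l i₀)).exp
  have hw : p i₀ * Real.exp (-l i₀) ≠ 0 := mul_ne_zero hp (Real.exp_ne_zero _)
  have hlim := tendsto_apply_momentRatio_sub_div_pow (w := fun j => p j * Real.exp (-l j))
    hderiv hw hi₁ hlt hdom
  simp only [momentRatio_mul_exp_neg] at hlim
  convert hlim using 2
  field_simp
  ring

/-- With `q = λ₂/λ₁` and posterior mean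
`m(s) = (∑ⱼ pⱼ λⱼ^{s+1} e^{-λⱼ}) / (∑ⱼ pⱼ λⱼ^s e^{-λⱼ})`,
`lim_{s→∞} q^{-s}·(e^{-m(s)} − e^{-λ₁}) = (λ₁ − λ₂)·e^{-λ₂}·p₂/p₁`. -/
theorem stmt7 (K : ℕ) (hK : 2 ≤ K) (l p : Fin K → ℝ)
    (hl : StrictAnti l) (hlpos : ∀ i, 0 < l i) (hp : ∀ i, 0 < p i)
    (hsum : ∑ i, p i = 1) :
    Filter.Tendsto
      (fun s : ℕ =>
        (Real.exp (-((∑ j, p j * l j ^ (s + 1) * Real.exp (-(l j))) /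
            (∑ j, p j * l j ^ s * Real.exp (-(l j))))) -
          Real.exp (-(l ⟨0, by omega⟩))) /
        (l ⟨1, by omega⟩ / l ⟨0, by omega⟩) ^ s)
      Filter.atTop
      (nhds ((l ⟨0, by omega⟩ - l ⟨1, by omega⟩) *
        Real.exp (-(l ⟨1, by omega⟩)) * p ⟨1, by omega⟩ / p ⟨0, by omega⟩)) := by
  refine stmt7_general (hp _).ne' (hlpos _).ne' ?_ fun j hj₀ hj₁ => ?_ <;>
    rw [abs_of_pos (hlpos _), abs_of_pos (hlpos _)]
  · exact hl (Fin.mk_lt_mk.2 one_pos)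
  · exact hl (Fin.lt_def.2 (by grind))
end

section
/- Let λ₁ > 0, let g be a probability measure on the interval [0, λ₁], and let X be the Poisson mixture with mixing measure g, i.e., P[X = s] = ∫ λ^s e^{-λ}/s! dg(λ) for natural numbers s. If S is a natural number with S + 1 > λ₁, then P[X > S] ≤ (λ₁/(S + 1 − λ₁)) · P[X = S]. -/
open MeasureTheory

/-!
The Poisson masses satisfy `(n + 1) P[Poi(x) = n + 1] = x P[Poi(x) = n]`. Averaging over
`x ∈ [0, c]` gives `(n + 1) P[X = n + 1] ≤ c P[X = n]` for the mixture `X`, and summing over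
`n ≥ S` gives `(S + 1) P[X > S] ≤ c P[X ≥ S] = c (P[X = S] + P[X > S])`. It remains to solve for
`P[X > S]`.
-/

/-- The mass `P[Poi(x) = n]` of the Poisson distribution, as a function of a real rate `x`; it is a
probability only for `0 ≤ x`. -/
noncomputable def poissonMass (n : ℕ) (x : ℝ) : ℝ :=
  x ^ n * Real.exp (-x) / n.factorial

/-- The mass `P[X = n]` of the Poisson mixture `X` with mixing measure `g`. The integral has its
intended meaning when `g` is a finite measure carried by `[0, ∞)`. -/
noncomputable def poissonMixture (g : Measure ℝ) (n : ℕ) : ℝ :=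
  ∫ x, poissonMass n x ∂g

lemma tsum_succ_le_of_mul_succ_le {a : ℕ → ℝ} {b c : ℝ} (ha : Summable a) (hcb : c < b)
    (hstep : ∀ k, b * a (k + 1) ≤ c * a k) :
    ∑' k, a (k + 1) ≤ c / (b - c) * a 0 := by
  have ha_succ : Summable fun k => a (k + 1) := (summable_nat_add_iff 1).2 ha
  have hsum : b * ∑' k, a (k + 1) ≤ c * (a 0 + ∑' k, a (k + 1)) :=
    calc b * ∑' k, a (k + 1) = ∑' k, b * a (k + 1) := tsum_mul_left.symm
      _ ≤ ∑' k, c * a k := (ha_succ.mul_left b).tsum_le_tsum hstep (ha.mul_left c)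
      _ = c * (a 0 + ∑' k, a (k + 1)) := by rw [tsum_mul_left, ha.tsum_eq_zero_add]
  rw [div_mul_eq_mul_div, le_div_iff₀ (sub_pos.2 hcb)]
  linarith

lemma continuous_poissonMass (n : ℕ) : Continuous (poissonMass n) := by
  unfold poissonMass
  fun_prop

lemma poissonMass_nonneg (n : ℕ) {x : ℝ} (hx : 0 ≤ x) : 0 ≤ poissonMass n x := by
  unfold poissonMass
  positivity

lemma sum_range_poissonMass_le_one (N : ℕ) {x : ℝ} (hx : 0 ≤ x) :
    ∑ n ∈ Finset.range N, poissonMass n x ≤ 1 :=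
  calc ∑ n ∈ Finset.range N, poissonMass n x
      = (∑ n ∈ Finset.range N, x ^ n / n.factorial) * Real.exp (-x) := by
        simp only [poissonMass, Finset.sum_mul, div_mul_eq_mul_div]
    _ ≤ Real.exp x * Real.exp (-x) := by
        gcongr
        exact Real.sum_le_exp_of_nonneg hx N
    _ = 1 := by rw [← Real.exp_add, add_neg_cancel, Real.exp_zero]

lemma poissonMass_le_one (n : ℕ) {x : ℝ} (hx : 0 ≤ x) : poissonMass n x ≤ 1 :=
  (Finset.single_le_sum (fun k _ => poissonMass_nonneg k hx) (Finset.self_mem_range_succ n)).trans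
    (sum_range_poissonMass_le_one (n + 1) hx)

lemma succ_mul_poissonMass_succ (n : ℕ) (x : ℝ) :
    (n + 1) * poissonMass (n + 1) x = x * poissonMass n x := by
  unfold poissonMass
  rw [Nat.factorial_succ, pow_succ]
  push_cast
  field_simp

section Mixture

variable {g : Measure ℝ}

lemma poissonMixture_nonneg (hg : ∀ᵐ x ∂g, 0 ≤ x) (n : ℕ) : 0 ≤ poissonMixture g n :=
  integral_nonneg_of_ae (hg.mono fun _ hx => poissonMass_nonneg n hx)

variable [IsFiniteMeasure g]

lemma integrable_poissonMass (hg : ∀ᵐ x ∂g, 0 ≤ x) (n : ℕ) : Integrable (poissonMass n) g := by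
  refine .of_bound (continuous_poissonMass n).aestronglyMeasurable 1 ?_
  filter_upwards [hg] with x hx
  rw [Real.norm_of_nonneg (poissonMass_nonneg n hx)]
  exact poissonMass_le_one n hx

lemma summable_poissonMixture (hg : ∀ᵐ x ∂g, 0 ≤ x) : Summable (poissonMixture g) := by
  refine summable_of_sum_range_le (c := ∫ _, 1 ∂g) (poissonMixture_nonneg hg) fun N => ?_
  calc ∑ n ∈ Finset.range N, poissonMixture g n
      = ∫ x, ∑ n ∈ Finset.range N, poissonMass n x ∂g :=
        (integral_finsetSum _ fun n _ => integrable_poissonMass hg n).symm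
    _ ≤ ∫ _, 1 ∂g :=
        integral_mono_ae (integrable_finsetSum _ fun n _ => integrable_poissonMass hg n)
          (integrable_const 1) (hg.mono fun _ hx => sum_range_poissonMass_le_one N hx)

lemma succ_mul_poissonMixture_succ_le {c : ℝ} (hg : ∀ᵐ x ∂g, x ∈ Set.Icc 0 c) (n : ℕ) :
    (n + 1) * poissonMixture g (n + 1) ≤ c * poissonMixture g n := by
  have hg_nonneg : ∀ᵐ x ∂g, 0 ≤ x := hg.mono fun _ hx => hx.1
  unfold poissonMixture
  rw [← integral_const_mul, ← integral_const_mul]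
  refine integral_mono_ae ((integrable_poissonMass hg_nonneg _).const_mul _)
    ((integrable_poissonMass hg_nonneg n).const_mul c) ?_
  filter_upwards [hg] with x hx
  rw [succ_mul_poissonMass_succ]
  exact mul_le_mul_of_nonneg_right hx.2 (poissonMass_nonneg n hx.1)

end Mixture

theorem stmt9_general {c : ℝ} {g : Measure ℝ} [IsFiniteMeasure g]
    (hg : ∀ᵐ x ∂g, x ∈ Set.Icc 0 c) {S : ℕ} (hS : c < S + 1) :
    ∑' k, poissonMixture g (S + 1 + k) ≤ c / (S + 1 - c) * poissonMixture g S := by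
  have hg_nonneg : ∀ᵐ x ∂g, 0 ≤ x := hg.mono fun _ hx => hx.1
  have hsummable : Summable fun k => poissonMixture g (S + k) :=
    (summable_poissonMixture hg_nonneg).comp_injective (add_right_injective S)
  have hstep (k : ℕ) :
      (S + 1 : ℝ) * poissonMixture g (S + (k + 1)) ≤ c * poissonMixture g (S + k) :=
    calc (S + 1 : ℝ) * poissonMixture g (S + (k + 1))
        ≤ ((S + k : ℕ) + 1) * poissonMixture g (S + (k + 1)) := by
          gcongr
          · exact poissonMixture_nonneg hg_nonneg _
          · exact Nat.le_add_right S k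
      _ ≤ c * poissonMixture g (S + k) := succ_mul_poissonMixture_succ_le hg (S + k)
  simpa only [add_zero, add_assoc, add_comm 1] using
    tsum_succ_le_of_mul_succ_le hsummable hS hstep

/-- For a Poisson mixture `X` whose mixing measure `g` is supported in `[0, λ₁]`,
if `S + 1 > λ₁` then `P[X > S] ≤ (λ₁/(S + 1 − λ₁)) · P[X = S]`. -/
theorem stmt9 (l1 : ℝ) (hl1 : 0 < l1) (g : Measure ℝ) [IsProbabilityMeasure g]
    (hg : g (Set.Icc 0 l1)ᶜ = 0) (S : ℕ) (hS : l1 < (S : ℝ) + 1) :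
    (∑' k : ℕ, ∫ x, x ^ (S + 1 + k) * Real.exp (-x) / (Nat.factorial (S + 1 + k)) ∂g) ≤
      (l1 / ((S : ℝ) + 1 - l1)) *
        ∫ x, x ^ S * Real.exp (-x) / (Nat.factorial S) ∂g :=
  stmt9_general (mem_ae_iff.2 hg) hS
end

section
/- Let g be a probability measure on [0,∞) and define f(s) = ∫ λ^s e^{-λ}/s! dg(λ) for natural numbers s, assuming f(s) > 0 and the integrals are finite for all s. Then for every natural number s, f(s+1)² ≤ ((s+2)/(s+1)) · f(s+2) · f(s); equivalently, the posterior mean (s+1)·f(s+1)/f(s) is nondecreasing in s. -/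
open MeasureTheory

/-! With `M s = ∫ x ^ s * exp (-x) ∂g` one has `f s = M s / s!`, and the factor `(s + 2) / (s + 1)`
exactly absorbs the factorials, so the claim is `M (s + 1) ^ 2 ≤ M (s + 2) * M s`. This is
Cauchy–Schwarz for the functions `x` and `1` with respect to the weight `x ^ s * exp (-x)`, which is
nonnegative `g`-almost everywhere: the integral of `(t * x + 1) ^ 2` against it is a quadratic
polynomial in `t` without sign change, so its discriminant is nonpositive. -/

section WeightedCauchySchwarz

variable {α : Type*} [MeasurableSpace α] {μ : Measure α} {X Y w : α → ℝ}

lemma integrable_mul_mul_of_integrable_sq_mul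
    (hXYw : AEStronglyMeasurable (fun a => X a * Y a * w a) μ)
    (hX2w : Integrable (fun a => X a ^ 2 * w a) μ) (hY2w : Integrable (fun a => Y a ^ 2 * w a) μ) :
    Integrable (fun a => X a * Y a * w a) μ := by
  refine (hX2w.norm.add hY2w.norm).mono' hXYw (.of_forall fun a => ?_)
  have abs_mul_le_sq_add_sq : |X a * Y a| ≤ X a ^ 2 + Y a ^ 2 := by
    rw [abs_le]
    constructor <;> nlinarith [sq_nonneg (X a - Y a), sq_nonneg (X a + Y a)]
  calc ‖X a * Y a * w a‖ = |X a * Y a| * ‖w a‖ := norm_mul _ _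
    _ ≤ (X a ^ 2 + Y a ^ 2) * ‖w a‖ := by gcongr
    _ = ‖X a ^ 2 * w a‖ + ‖Y a ^ 2 * w a‖ := by
      simp only [norm_mul, norm_pow, Real.norm_eq_abs, sq_abs, add_mul]

lemma integral_sq_const_mul_add_mul (hX2w : Integrable (fun a => X a ^ 2 * w a) μ)
    (hXYw : Integrable (fun a => X a * Y a * w a) μ)
    (hY2w : Integrable (fun a => Y a ^ 2 * w a) μ) (t : ℝ) :
    ∫ a, (t * X a + Y a) ^ 2 * w a ∂μ =
      (∫ a, X a ^ 2 * w a ∂μ) * (t * t) + 2 * (∫ a, X a * Y a * w a ∂μ) * t +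
        ∫ a, Y a ^ 2 * w a ∂μ := by
  have quadratic := hX2w.const_mul (t * t)
  have linear := hXYw.const_mul (2 * t)
  calc ∫ a, (t * X a + Y a) ^ 2 * w a ∂μ
      = ∫ a, t * t * (X a ^ 2 * w a) + 2 * t * (X a * Y a * w a) + Y a ^ 2 * w a ∂μ := by
        congr with a
        ring
    _ = t * t * (∫ a, X a ^ 2 * w a ∂μ) + 2 * t * (∫ a, X a * Y a * w a ∂μ) +
          ∫ a, Y a ^ 2 * w a ∂μ := by
        rw [integral_add (quadratic.fun_add linear) hY2w, integral_add quadratic linear,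
          integral_const_mul, integral_const_mul]
    _ = _ := by ring

lemma sq_integral_mul_mul_le (hw : 0 ≤ᵐ[μ] w)
    (hXYw : AEStronglyMeasurable (fun a => X a * Y a * w a) μ)
    (hX2w : Integrable (fun a => X a ^ 2 * w a) μ) (hY2w : Integrable (fun a => Y a ^ 2 * w a) μ) :
    (∫ a, X a * Y a * w a ∂μ) ^ 2 ≤ (∫ a, X a ^ 2 * w a ∂μ) * ∫ a, Y a ^ 2 * w a ∂μ := by
  have hXYw_int := integrable_mul_mul_of_integrable_sq_mul hXYw hX2w hY2w
  have quadratic_nonneg (t : ℝ) : 0 ≤ (∫ a, X a ^ 2 * w a ∂μ) * (t * t) +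
      2 * (∫ a, X a * Y a * w a ∂μ) * t + ∫ a, Y a ^ 2 * w a ∂μ := by
    rw [← integral_sq_const_mul_add_mul hX2w hXYw_int hY2w t]
    refine integral_nonneg_of_ae ?_
    filter_upwards [hw] with a ha using mul_nonneg (sq_nonneg _) ha
  have discrim_nonpos := discrim_le_zero quadratic_nonneg
  rw [discrim] at discrim_nonpos
  linarith

end WeightedCauchySchwarz

lemma sq_integral_pow_succ_mul_le {μ : Measure ℝ} {w : ℝ → ℝ} {s : ℕ}
    (h_nonneg : 0 ≤ᵐ[μ] fun x => x ^ s * w x) (hs : Integrable (fun x => x ^ s * w x) μ)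
    (hs2 : Integrable (fun x => x ^ (s + 2) * w x) μ) :
    (∫ x, x ^ (s + 1) * w x ∂μ) ^ 2 ≤
      (∫ x, x ^ (s + 2) * w x ∂μ) * ∫ x, x ^ s * w x ∂μ := by
  have pow_succ_mul (x : ℝ) : x ^ (s + 1) * w x = x * 1 * (x ^ s * w x) := by ring
  have pow_add_two_mul (x : ℝ) : x ^ (s + 2) * w x = x ^ 2 * (x ^ s * w x) := by ring
  have one_sq_mul (x : ℝ) : (1 : ℝ) ^ 2 * (x ^ s * w x) = x ^ s * w x := by ring
  have h_meas : AEStronglyMeasurable (fun x => x * 1 * (x ^ s * w x)) μ :=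
    (aestronglyMeasurable_id.mul_const 1).mul hs.aestronglyMeasurable
  simp only [pow_succ_mul, pow_add_two_mul] at hs2 ⊢
  simpa only [one_sq_mul] using
    sq_integral_mul_mul_le h_nonneg h_meas hs2 (by simpa only [one_sq_mul] using hs)

lemma div_mul_div_factorial_mul_div_factorial (a b : ℝ) (s : ℕ) :
    ((s : ℝ) + 2) / ((s : ℝ) + 1) * (a / (s + 2).factorial) * (b / s.factorial) =
      a * b / ((s + 1).factorial : ℝ) ^ 2 := by
  rw [Nat.factorial_succ (s + 1), Nat.factorial_succ s]
  push_cast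
  field_simp
  ring

theorem stmt10_general (g : Measure ℝ) (hg : g (Set.Iio 0) = 0) (f : ℕ → ℝ)
    (hf : ∀ s : ℕ, f s = ∫ x, x ^ s * Real.exp (-x) / (Nat.factorial s) ∂g) (s : ℕ)
    (hs : Integrable (fun x => x ^ s * Real.exp (-x)) g)
    (hs2 : Integrable (fun x => x ^ (s + 2) * Real.exp (-x)) g) :
    f (s + 1) ^ 2 ≤ (((s : ℝ) + 2) / ((s : ℝ) + 1)) * f (s + 2) * f s := by
  have ae_nonneg : ∀ᵐ x ∂g, 0 ≤ x := by simpa only [ae_iff, not_le, Set.Iio] using hg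
  have weight_nonneg : 0 ≤ᵐ[g] fun x => x ^ s * Real.exp (-x) := by
    filter_upwards [ae_nonneg] with x hx using mul_nonneg (pow_nonneg hx s) (Real.exp_nonneg _)
  simp only [hf, integral_div]
  rw [div_mul_div_factorial_mul_div_factorial, div_pow]
  gcongr
  exact sq_integral_pow_succ_mul_le weight_nonneg hs hs2

/-- For the marginal pmf `f(s) = ∫ λ^s e^{-λ}/s! dg(λ)` of a Poisson mixture,
`f(s+1)² ≤ ((s+2)/(s+1))·f(s+2)·f(s)`, i.e. the posterior mean `(s+1)f(s+1)/f(s)`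
is nondecreasing in `s`. -/
theorem stmt10 (g : Measure ℝ) [IsProbabilityMeasure g] (hg : g (Set.Iio 0) = 0)
    (f : ℕ → ℝ)
    (hf : ∀ s : ℕ, f s = ∫ x, x ^ s * Real.exp (-x) / (Nat.factorial s) ∂g)
    (hpos : ∀ s : ℕ, 0 < f s)
    (hint : ∀ s : ℕ, Integrable (fun x => x ^ s * Real.exp (-x)) g) :
    ∀ s : ℕ, f (s + 1) ^ 2 ≤ (((s : ℝ) + 2) / ((s : ℝ) + 1)) * f (s + 2) * f s :=
  fun s => stmt10_general g hg f hf s (hint s) (hint (s + 2))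
end

section
/- Let g be a probability measure on [0,∞) with finite positive mean μ = ∫ λ dg(λ) > 0, and let X be the Poisson mixture with mixing measure g, i.e., P[X ≤ m] = ∫ (∑_{k=0}^m λ^k e^{-λ}/k!) dg(λ). Then for every real h > 1, P[X ≤ h²·μ] ≥ (1 − 1/h)². -/
open MeasureTheory

open ProbabilityTheory
open scoped NNReal Nat

/-!
One application of Markov's inequality suffices. A Poisson variable of rate `r` has mean `r`, so it
exceeds `m` with probability at most `r / (m + 1)`. Averaging over the rate, the mixture exceeds
`m = ⌊t μ⌋` with probability at most `μ / (m + 1) ≤ 1 / t`. For `t = h ^ 2` this is sharper than the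
claim, since `1 - 1 / h ^ 2 = (1 - 1 / h) * (1 + 1 / h)`.
-/

lemma one_sub_integral_div_le_measureReal_Iic {ν : Measure ℕ} [IsProbabilityMeasure ν]
    (hν : Integrable (fun n : ℕ ↦ (n : ℝ)) ν) (m : ℕ) :
    1 - (∫ n, (n : ℝ) ∂ν) / (m + 1) ≤ ν.real (Set.Iic m) := by
  have markov : (m + 1 : ℝ) * ν.real {n : ℕ | (m + 1 : ℝ) ≤ n} ≤ ∫ n, (n : ℝ) ∂ν :=
    mul_meas_ge_le_integral_of_nonneg (ae_of_all _ fun n ↦ n.cast_nonneg) hν _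
  have compl_Iic : (Set.Iic m)ᶜ = {n : ℕ | (m + 1 : ℝ) ≤ n} := by
    ext n
    simp only [Set.compl_Iic, Set.mem_Ioi, Set.mem_ofPred_eq]
    exact_mod_cast Nat.lt_iff_add_one_le
  have tail_le : ν.real (Set.Iic m)ᶜ ≤ (∫ n, (n : ℝ) ∂ν) / (m + 1) := by
    rwa [compl_Iic, le_div_iff₀' (by positivity)]
  rw [probReal_compl_eq_one_sub measurableSet_Iic] at tail_le
  linarith

lemma hasSum_poissonMeasure_mul_natCast (r : ℝ≥0) :
    HasSum (fun n : ℕ ↦ Real.exp (-r) * r ^ n / n ! * n) r := by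
  rw [← hasSum_nat_add_iff' 1]
  convert! (hasSum_one_poissonMeasure r).mul_left (r : ℝ) using 1
  · ext n
    rw [Nat.factorial_succ]
    push_cast
    field_simp
    ring
  · simp

lemma integrable_natCast_poissonMeasure (r : ℝ≥0) :
    Integrable (fun n : ℕ ↦ (n : ℝ)) (poissonMeasure r) := by
  simpa only [integrable_poissonMeasure_iff, Real.norm_natCast]
    using (hasSum_poissonMeasure_mul_natCast r).summable

lemma integral_natCast_poissonMeasure (r : ℝ≥0) : ∫ n, (n : ℝ) ∂(poissonMeasure r) = r := by
  simpa only [integral_poissonMeasure, smul_eq_mul]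
    using (hasSum_poissonMeasure_mul_natCast r).tsum_eq

lemma one_sub_div_le_poissonMeasure_real_Iic (r : ℝ≥0) (m : ℕ) :
    1 - r / (m + 1) ≤ (poissonMeasure r).real (Set.Iic m) := by
  simpa only [integral_natCast_poissonMeasure]
    using one_sub_integral_div_le_measureReal_Iic (integrable_natCast_poissonMeasure r) m

lemma poissonMeasure_real_Iic (r : ℝ≥0) (m : ℕ) :
    (poissonMeasure r).real (Set.Iic m) =
      ∑ k ∈ Finset.range (m + 1), (r : ℝ) ^ k * Real.exp (-r) / k ! := by
  have Iic_eq : Set.Iic m = (Finset.range (m + 1) : Set ℕ) := by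
    ext k
    simp
  rw [Iic_eq, ← sum_measureReal_singleton]
  simp only [poissonMeasure_real_singleton, mul_comm]

lemma measurable_poissonMeasure_real_Iic (m : ℕ) :
    Measurable fun r : ℝ≥0 ↦ (poissonMeasure r).real (Set.Iic m) := by
  simp only [poissonMeasure_real_Iic]
  fun_prop

section Mixture

variable {Ω : Type*} {mΩ : MeasurableSpace Ω} {P : Measure Ω}

lemma integrable_poissonMeasure_real_Iic [IsFiniteMeasure P] {rate : Ω → ℝ≥0}
    (hrate : AEMeasurable rate P) (m : ℕ) :
    Integrable (fun ω ↦ (poissonMeasure (rate ω)).real (Set.Iic m)) P := by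
  refine .of_bound
    ((measurable_poissonMeasure_real_Iic m).comp_aemeasurable hrate).aestronglyMeasurable
    1 (ae_of_all _ fun ω ↦ ?_)
  rw [Real.norm_of_nonneg measureReal_nonneg]
  exact measureReal_le_one

variable [IsProbabilityMeasure P]

lemma one_sub_integral_div_le_integral_poissonMeasure_real_Iic {rate : Ω → ℝ≥0}
    (hrate : Integrable (fun ω ↦ (rate ω : ℝ)) P) (m : ℕ) :
    1 - (∫ ω, (rate ω : ℝ) ∂P) / (m + 1) ≤
      ∫ ω, (poissonMeasure (rate ω)).real (Set.Iic m) ∂P := by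
  have rate_aemeasurable : AEMeasurable rate P := by
    simpa only [Real.toNNReal_coe] using hrate.aemeasurable.real_toNNReal
  calc 1 - (∫ ω, (rate ω : ℝ) ∂P) / (m + 1) = ∫ ω, (1 - (rate ω : ℝ) / (m + 1)) ∂P := by
        rw [integral_sub (integrable_const 1) (hrate.div_const _), integral_div, integral_const,
          probReal_univ, one_smul]
    _ ≤ ∫ ω, (poissonMeasure (rate ω)).real (Set.Iic m) ∂P :=
        integral_mono ((integrable_const 1).sub (hrate.div_const _))
          (integrable_poissonMeasure_real_Iic rate_aemeasurable m)
          fun ω ↦ one_sub_div_le_poissonMeasure_real_Iic (rate ω) m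

theorem stmt12_general {rate : Ω → ℝ} (rate_nonneg : 0 ≤ᵐ[P] rate) (hrate : Integrable rate P)
    {t : ℝ} (ht : 0 < t) :
    1 - 1 / t ≤ ∫ ω, (∑ k ∈ Finset.range (⌊t * ∫ ω, rate ω ∂P⌋₊ + 1),
      rate ω ^ k * Real.exp (-rate ω) / k !) ∂P := by
  set μ := ∫ ω, rate ω ∂P
  set m := ⌊t * μ⌋₊
  have coe_toNNReal : (fun ω ↦ ((rate ω).toNNReal : ℝ)) =ᵐ[P] rate :=
    rate_nonneg.mono fun ω hω ↦ Real.coe_toNNReal _ hω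
  have mean_div_le : μ / (m + 1) ≤ 1 / t := by
    rw [div_le_div_iff₀ (by positivity) ht, one_mul, mul_comm]
    exact (Nat.lt_floor_add_one _).le
  calc 1 - 1 / t ≤ 1 - (∫ ω, ((rate ω).toNNReal : ℝ) ∂P) / (m + 1) := by
        rw [integral_congr_ae coe_toNNReal]
        exact sub_le_sub_left mean_div_le 1
    _ ≤ ∫ ω, (poissonMeasure (rate ω).toNNReal).real (Set.Iic m) ∂P :=
        one_sub_integral_div_le_integral_poissonMeasure_real_Iic
          (hrate.congr coe_toNNReal.symm) m
    _ = ∫ ω, (∑ k ∈ Finset.range (m + 1), rate ω ^ k * Real.exp (-rate ω) / k !) ∂P :=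
        integral_congr_ae <| coe_toNNReal.mono fun ω hω ↦ by
          simp only [poissonMeasure_real_Iic, hω]

end Mixture

lemma sq_one_sub_one_div_le {h : ℝ} (hh : 1 ≤ h) : (1 - 1 / h) ^ 2 ≤ 1 - 1 / h ^ 2 := by
  have inv_nonneg : 0 ≤ 1 / h := by positivity
  have inv_le_one : 1 / h ≤ 1 := div_le_one_of_le₀ hh (by positivity)
  calc (1 - 1 / h) ^ 2 = (1 - 1 / h) * (1 - 1 / h) := sq _
    _ ≤ (1 - 1 / h) * (1 + 1 / h) :=
        mul_le_mul_of_nonneg_left (by linarith) (sub_nonneg.2 inv_le_one)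
    _ = 1 - 1 / h ^ 2 := by ring

/-- For a Poisson mixture `X` with mixing measure `g` on `[0,∞)` of finite positive mean `μ`,
for every real `h > 1`, `P[X ≤ h²·μ] ≥ (1 − 1/h)²`. -/
theorem stmt12 (g : Measure ℝ) [IsProbabilityMeasure g] (hg : g (Set.Iio 0) = 0)
    (hint : Integrable (fun x : ℝ => x) g) (hmean : 0 < ∫ x, x ∂g) :
    ∀ h : ℝ, 1 < h →
      (1 - 1 / h) ^ 2 ≤
        ∫ x, (∑ k ∈ Finset.range (Nat.floor (h ^ 2 * ∫ x, x ∂g) + 1),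
          x ^ k * Real.exp (-x) / (Nat.factorial k)) ∂g := by
  intro h hh
  have rate_nonneg : ∀ᵐ x ∂g, 0 ≤ x := by
    simpa only [Set.mem_Iio, not_lt] using measure_eq_zero_iff_ae_notMem.1 hg
  exact (sq_one_sub_one_div_le hh.le).trans (stmt12_general rate_nonneg hint (by positivity))
end

section
/- Let S be a finite nonempty index set, let y_s > 0 for s ∈ S, and set n = ∑_{s ∈ S} y_s. Let M_s > 0 for s ∈ S, and suppose u, v : S → ℝ satisfy 0 < u(s) ≤ M_s and 0 < v(s) ≤ M_s for all s ∈ S, and ∑_{s ∈ S} (y_s/n)·log v(s) ≥ ∑_{s ∈ S} (y_s/n)·log u(s). Then for every s ∈ S, v(s) ≥ u(s) · ∏_{s' ∈ S, s' ≠ s} (u(s')/M_{s'})^{y_{s'}/y_s}. -/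
/-!
The likelihood comparison says `∏ t, u t ^ y t ≤ ∏ t, v t ^ y t`. Dividing both sides by
`∏ t ≠ s, M t ^ y t` and taking `y s`-th roots turns it into
`u s * ∏ t ≠ s, (u t / M t) ^ (y t / y s) ≤ v s * ∏ t ≠ s, (v t / M t) ^ (y t / y s)`,
and every factor of the last product is at most `1`.
-/

section WeightedProducts

variable {α : Type*} {S : Finset α} {y M u v : α → ℝ} {s : α}

theorem prod_rpow_eq_exp_sum_mul_log (hu : ∀ t ∈ S, 0 < u t) :
    ∏ t ∈ S, u t ^ y t = Real.exp (∑ t ∈ S, y t * Real.log (u t)) := by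
  rw [Real.exp_sum]
  refine Finset.prod_congr rfl fun t ht => ?_
  rw [Real.rpow_def_of_pos (hu t ht), mul_comm]

theorem sum_div_mul_log_le_sum_div_mul_log_iff {n : ℝ} (hn : 0 < n)
    (hu : ∀ t ∈ S, 0 < u t) (hv : ∀ t ∈ S, 0 < v t) :
    ∑ t ∈ S, y t / n * Real.log (u t) ≤ ∑ t ∈ S, y t / n * Real.log (v t) ↔
      ∏ t ∈ S, u t ^ y t ≤ ∏ t ∈ S, v t ^ y t := by
  simp only [div_mul_eq_mul_div, ← Finset.sum_div]
  rw [div_le_div_iff_of_pos_right hn, prod_rpow_eq_exp_sum_mul_log hu,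
    prod_rpow_eq_exp_sum_mul_log hv, Real.exp_le_exp]

theorem prod_div_rpow_nonneg {w : α → ℝ} (hu : ∀ t ∈ S, 0 ≤ u t) (hM : ∀ t ∈ S, 0 ≤ M t) :
    0 ≤ ∏ t ∈ S, (u t / M t) ^ w t :=
  Finset.prod_nonneg fun t ht => Real.rpow_nonneg (div_nonneg (hu t ht) (hM t ht)) _

theorem prod_div_rpow_le_one {w : α → ℝ} (hu : ∀ t ∈ S, 0 ≤ u t) (huM : ∀ t ∈ S, u t ≤ M t)
    (hw : ∀ t ∈ S, 0 ≤ w t) : ∏ t ∈ S, (u t / M t) ^ w t ≤ 1 := by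
  have hratio : ∀ t ∈ S, 0 ≤ u t / M t := fun t ht =>
    div_nonneg (hu t ht) ((hu t ht).trans (huM t ht))
  refine Finset.prod_le_one (fun t ht => Real.rpow_nonneg (hratio t ht) _) fun t ht => ?_
  exact Real.rpow_le_one (hratio t ht)
    (div_le_one_of_le₀ (huM t ht) ((hu t ht).trans (huM t ht))) (hw t ht)

theorem prod_div_rpow_div_rpow {c : ℝ} (hc : c ≠ 0) (hu : ∀ t ∈ S, 0 ≤ u t)
    (hM : ∀ t ∈ S, 0 ≤ M t) :
    (∏ t ∈ S, (u t / M t) ^ (y t / c)) ^ c =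
      (∏ t ∈ S, u t ^ y t) / ∏ t ∈ S, M t ^ y t := by
  have hratio : ∀ t ∈ S, 0 ≤ u t / M t := fun t ht => div_nonneg (hu t ht) (hM t ht)
  rw [← Real.finsetProd_rpow _ _ fun t ht => Real.rpow_nonneg (hratio t ht) _,
    ← Finset.prod_div_distrib]
  refine Finset.prod_congr rfl fun t ht => ?_
  rw [← Real.rpow_mul (hratio t ht), div_mul_cancel₀ _ hc, Real.div_rpow (hu t ht) (hM t ht)]

variable [DecidableEq α]

theorem mul_prod_erase_div_rpow_rpow (hs : s ∈ S) (hys : y s ≠ 0) (hu : ∀ t ∈ S, 0 ≤ u t)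
    (hM : ∀ t ∈ S.erase s, 0 ≤ M t) :
    (u s * ∏ t ∈ S.erase s, (u t / M t) ^ (y t / y s)) ^ y s =
      (∏ t ∈ S, u t ^ y t) / ∏ t ∈ S.erase s, M t ^ y t := by
  have hu' : ∀ t ∈ S.erase s, 0 ≤ u t := fun t ht => hu t (Finset.mem_of_mem_erase ht)
  rw [Real.mul_rpow (hu s hs) (prod_div_rpow_nonneg hu' hM), prod_div_rpow_div_rpow hys hu' hM,
    ← mul_div_assoc, Finset.mul_prod_erase S (fun t => u t ^ y t) hs]

theorem mul_prod_erase_div_rpow_le_iff (hs : s ∈ S) (hys : 0 < y s) (hu : ∀ t ∈ S, 0 ≤ u t)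
    (hv : ∀ t ∈ S, 0 ≤ v t) (hM : ∀ t ∈ S.erase s, 0 < M t) :
    u s * ∏ t ∈ S.erase s, (u t / M t) ^ (y t / y s) ≤
        v s * ∏ t ∈ S.erase s, (v t / M t) ^ (y t / y s) ↔
      ∏ t ∈ S, u t ^ y t ≤ ∏ t ∈ S, v t ^ y t := by
  have hM' : ∀ t ∈ S.erase s, 0 ≤ M t := fun t ht => (hM t ht).le
  have hnonneg {f : α → ℝ} (hf : ∀ t ∈ S, 0 ≤ f t) :
      0 ≤ f s * ∏ t ∈ S.erase s, (f t / M t) ^ (y t / y s) :=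
    mul_nonneg (hf s hs)
      (prod_div_rpow_nonneg (fun t ht => hf t (Finset.mem_of_mem_erase ht)) hM')
  have hprodM : 0 < ∏ t ∈ S.erase s, M t ^ y t :=
    Finset.prod_pos fun t ht => Real.rpow_pos_of_pos (hM t ht) _
  rw [← Real.rpow_le_rpow_iff (hnonneg hu) (hnonneg hv) hys,
    mul_prod_erase_div_rpow_rpow hs hys.ne' hu hM',
    mul_prod_erase_div_rpow_rpow hs hys.ne' hv hM', div_le_div_iff_of_pos_right hprodM]

end WeightedProducts

theorem stmt13_general {α : Type*} [DecidableEq α] {S : Finset α} {y M u v : α → ℝ} {s : α}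
    (hs : s ∈ S) (hys : 0 < y s) (hy : ∀ t ∈ S, 0 ≤ y t)
    (hu : ∀ t ∈ S, 0 < u t) (hv : ∀ t ∈ S, 0 < v t) (hvM : ∀ t ∈ S.erase s, v t ≤ M t)
    (hobj : ∑ t ∈ S, (y t / ∑ t' ∈ S, y t') * Real.log (u t) ≤
      ∑ t ∈ S, (y t / ∑ t' ∈ S, y t') * Real.log (v t)) :
    u s * ∏ t ∈ S.erase s, (u t / M t) ^ (y t / y s) ≤ v s := by
  have hn : 0 < ∑ t ∈ S, y t := Finset.sum_pos' hy ⟨s, hs, hys⟩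
  have hv' : ∀ t ∈ S.erase s, 0 < v t := fun t ht => hv t (Finset.mem_of_mem_erase ht)
  have hlik : ∏ t ∈ S, u t ^ y t ≤ ∏ t ∈ S, v t ^ y t :=
    (sum_div_mul_log_le_sum_div_mul_log_iff hn hu hv).1 hobj
  calc
    u s * ∏ t ∈ S.erase s, (u t / M t) ^ (y t / y s)
      ≤ v s * ∏ t ∈ S.erase s, (v t / M t) ^ (y t / y s) :=
        (mul_prod_erase_div_rpow_le_iff hs hys (fun t ht => (hu t ht).le)
          (fun t ht => (hv t ht).le) fun t ht => (hv' t ht).trans_le (hvM t ht)).2 hlik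
    _ ≤ v s :=
        mul_le_of_le_one_right (hv s hs).le <|
          prod_div_rpow_le_one (fun t ht => (hv' t ht).le) hvM fun t ht =>
            div_nonneg (hy t (Finset.mem_of_mem_erase ht)) hys.le

/-- Core inequality for the CG iterate lower bound: if `0 < u(s), v(s) ≤ M_s` on a finite set
`S` with weights `y_s > 0`, `n = ∑ y_s`, and the weighted log-likelihood of `v` is at least
that of `u`, then `v(s) ≥ u(s) · ∏_{s' ≠ s} (u(s')/M_{s'})^{y_{s'}/y_s}` for every `s ∈ S`. -/
theorem stmt13 {α : Type*} [DecidableEq α] (S : Finset α) (hS : S.Nonempty)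
    (y M u v : α → ℝ)
    (hy : ∀ s ∈ S, 0 < y s) (hM : ∀ s ∈ S, 0 < M s)
    (hu : ∀ s ∈ S, 0 < u s ∧ u s ≤ M s) (hv : ∀ s ∈ S, 0 < v s ∧ v s ≤ M s)
    (hobj : ∑ s ∈ S, (y s / ∑ s' ∈ S, y s') * Real.log (u s) ≤
            ∑ s ∈ S, (y s / ∑ s' ∈ S, y s') * Real.log (v s)) :
    ∀ s ∈ S, u s * ∏ s' ∈ S.erase s, (u s' / M s') ^ (y s' / y s) ≤ v s := by
  exact fun s hs => stmt13_general hs (hy s hs) (fun t ht => (hy t ht).le) (fun t ht => (hu t ht).1)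
    (fun t ht => (hv t ht).1) (fun t ht => (hv t (Finset.mem_of_mem_erase ht)).2) hobj
end

section
/- Let g be a probability measure on [0,∞) such that g((M,∞)) > 0 for every real M > 0 (i.e., the prior on the Poisson rate is unbounded). Then for every M > 0, lim_{k→∞} (∫_{(M,∞)} λ^k e^{-λ} dg(λ)) / (∫_{[0,∞)} λ^k e^{-λ} dg(λ)) = 1; that is, the posterior probability P[λ > M | X = k] tends to 1 as the observed count k tends to infinity. -/
open MeasureTheory

/-!
Tilt the prior by `exp (-x)`, so that the two integrals become, up to a common factor, `k`-th
moments of a finite measure `μ`. Since `μ` charges `(M, ∞)`, it charges `[r, ∞)` for some `r > M`.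
The part of the `k`-th moment below `M` is then `O(M ^ k)`, whereas the whole moment is at least a
positive multiple of `r ^ k` by Markov's inequality.
-/

section Moments

variable {α : Type*} [MeasurableSpace α] {μ : Measure α} {f : α → ℝ}

lemma exists_gt_measure_le_ne_zero {M : ℝ} (hμ : μ {x | M < f x} ≠ 0) :
    ∃ r > M, μ {x | r ≤ f x} ≠ 0 := by
  contrapose! hμ
  simpa [ae_iff] using (ae_le_const_iff_forall_gt_measure_zero f M).2 hμ

variable [IsFiniteMeasure μ]

lemma setIntegral_pow_le_pow_mul_measureReal (hf : 0 ≤ᵐ[μ] f) (M : ℝ) (k : ℕ) :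
    ∫ x in {x | f x ≤ M}, f x ^ k ∂μ ≤ M ^ k * μ.real {x | f x ≤ M} := by
  refine (Real.le_norm_self _).trans
    (norm_setIntegral_le_of_norm_le_const_ae' (measure_lt_top μ _) ?_)
  filter_upwards [hf] with x hx hxM
  rw [Real.norm_of_nonneg (pow_nonneg hx k)]
  exact pow_le_pow_left₀ hx hxM k

lemma pow_mul_measureReal_le_integral_pow (hf : 0 ≤ᵐ[μ] f) {k : ℕ}
    (hint : Integrable (fun x => f x ^ k) μ) {r : ℝ} (hr : 0 ≤ r) :
    r ^ k * μ.real {x | r ≤ f x} ≤ ∫ x, f x ^ k ∂μ := by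
  have hpow : 0 ≤ᵐ[μ] fun x => f x ^ k := hf.mono fun x hx => pow_nonneg hx k
  calc r ^ k * μ.real {x | r ≤ f x}
      ≤ r ^ k * μ.real {x | r ^ k ≤ f x ^ k} :=
        mul_le_mul_of_nonneg_left
          (measureReal_mono fun x hx => pow_le_pow_left₀ hr hx k) (pow_nonneg hr k)
    _ ≤ ∫ x, f x ^ k ∂μ := mul_meas_ge_le_integral_of_nonneg hpow hint _

lemma integral_pow_pos (hf : 0 ≤ᵐ[μ] f) {k : ℕ}
    (hint : Integrable (fun x => f x ^ k) μ) (hμ : μ {x | 0 < f x} ≠ 0) :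
    0 < ∫ x, f x ^ k ∂μ := by
  obtain ⟨r, hr, hμr⟩ := exists_gt_measure_le_ne_zero hμ
  calc 0 < r ^ k * μ.real {x | r ≤ f x} :=
        mul_pos (pow_pos hr k) (ENNReal.toReal_pos hμr (measure_ne_top μ _))
    _ ≤ ∫ x, f x ^ k ∂μ := pow_mul_measureReal_le_integral_pow hf hint hr.le

lemma tendsto_setIntegral_le_pow_div_integral_pow (hf : 0 ≤ᵐ[μ] f)
    (hint : ∀ k : ℕ, Integrable (fun x => f x ^ k) μ) {M : ℝ} (hM : 0 ≤ M)
    (hμ : μ {x | M < f x} ≠ 0) :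
    Filter.Tendsto
      (fun k : ℕ => (∫ x in {x | f x ≤ M}, f x ^ k ∂μ) / ∫ x, f x ^ k ∂μ)
      Filter.atTop (nhds 0) := by
  obtain ⟨r, hMr, hμr⟩ := exists_gt_measure_le_ne_zero hμ
  have hr : 0 < r := hM.trans_lt hMr
  have hc : 0 < μ.real {x | r ≤ f x} := ENNReal.toReal_pos hμr (measure_ne_top μ _)
  have hgeom : Filter.Tendsto
      (fun k : ℕ => (M / r) ^ k * (μ.real {x | f x ≤ M} / μ.real {x | r ≤ f x}))
      Filter.atTop (nhds 0) := by
    simpa only [zero_mul] using (tendsto_pow_atTop_nhds_zero_of_lt_one (by positivity)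
      ((div_lt_one hr).2 hMr)).mul_const (μ.real {x | f x ≤ M} / μ.real {x | r ≤ f x})
  refine squeeze_zero (fun k => ?_) (fun k => ?_) hgeom
  · have hpow : 0 ≤ᵐ[μ] fun x => f x ^ k := hf.mono fun x hx => pow_nonneg hx k
    exact div_nonneg (integral_nonneg_of_ae (ae_restrict_of_ae hpow)) (integral_nonneg_of_ae hpow)
  · calc (∫ x in {x | f x ≤ M}, f x ^ k ∂μ) / ∫ x, f x ^ k ∂μ
        ≤ (M ^ k * μ.real {x | f x ≤ M}) / (r ^ k * μ.real {x | r ≤ f x}) := by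
          gcongr
          · exact setIntegral_pow_le_pow_mul_measureReal hf M k
          · exact pow_mul_measureReal_le_integral_pow hf (hint k) hr.le
      _ = (M / r) ^ k * (μ.real {x | f x ≤ M} / μ.real {x | r ≤ f x}) := by
          rw [div_pow, div_mul_div_comm]

theorem tendsto_setIntegral_lt_pow_div_integral_pow (hf : 0 ≤ᵐ[μ] f)
    (hint : ∀ k : ℕ, Integrable (fun x => f x ^ k) μ) {M : ℝ} (hM : 0 ≤ M)
    (hμ : μ {x | M < f x} ≠ 0) :
    Filter.Tendsto
      (fun k : ℕ => (∫ x in {x | M < f x}, f x ^ k ∂μ) / ∫ x, f x ^ k ∂μ)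
      Filter.atTop (nhds 1) := by
  have hμ0 : μ {x | 0 < f x} ≠ 0 := fun h => hμ (measure_mono_null (fun _ => hM.trans_lt) h)
  have hmeas : NullMeasurableSet {x | M < f x} μ :=
    nullMeasurableSet_lt aemeasurable_const (by simpa using (hint 1).aemeasurable)
  have hcompl : {x | M < f x}ᶜ = {x | f x ≤ M} := by ext; simp
  have hsplit (k : ℕ) : (∫ x in {x | M < f x}, f x ^ k ∂μ) / ∫ x, f x ^ k ∂μ =
      1 - (∫ x in {x | f x ≤ M}, f x ^ k ∂μ) / ∫ x, f x ^ k ∂μ := by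
    rw [eq_sub_iff_add_eq, ← add_div, ← hcompl, integral_add_compl₀ hmeas (hint k),
      div_self (integral_pow_pos hf (hint k) hμ0).ne']
  simpa only [hsplit, sub_zero] using
    (tendsto_setIntegral_le_pow_div_integral_pow hf hint hM hμ).const_sub 1

lemma integrable_pow_mul_exp_neg (hf : 0 ≤ᵐ[μ] f) (hmeas : AEMeasurable f μ) (k : ℕ) :
    Integrable (fun x => f x ^ k * Real.exp (-f x)) μ := by
  -- Integrability of `exp (v * f)` at `v = -1 ± 1` controls all the moments at `v = -1`.
  have hexp : Integrable (fun x => Real.exp ((-1 - 1) * f x)) μ := by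
    refine Integrable.of_bound (by fun_prop) 1 ?_
    filter_upwards [hf] with x hx
    rw [Real.norm_of_nonneg (Real.exp_nonneg _), Real.exp_le_one_iff]
    exact mul_nonpos_of_nonpos_of_nonneg (by norm_num) hx
  simpa using ProbabilityTheory.integrable_pow_mul_exp_of_integrable_exp_mul one_ne_zero
    (by simp) hexp k

end Moments

lemma setIntegral_tilted_div_integral_tilted {α : Type*} [MeasurableSpace α] {μ : Measure α}
    {u : α → ℝ} (hu : Integrable (fun x => Real.exp (u x)) μ) (h : α → ℝ) {s : Set α}
    (hs : MeasurableSet s) :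
    (∫ x in s, h x ∂μ.tilted u) / ∫ x, h x ∂μ.tilted u =
      (∫ x in s, h x * Real.exp (u x) ∂μ) / ∫ x, h x * Real.exp (u x) ∂μ := by
  rcases eq_zero_or_neZero μ with rfl | _
  · simp
  have hZ : ∫ x, Real.exp (u x) ∂μ ≠ 0 := (integral_exp_pos hu).ne'
  simp only [setIntegral_tilted' u h hs, integral_tilted, smul_eq_mul, div_mul_eq_mul_div,
    integral_div, div_div_div_cancel_right₀ hZ, mul_comm (Real.exp _)]

theorem stmt16_general (g : Measure ℝ) (hg : ∀ᵐ x ∂g, 0 ≤ x)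
    (hint : ∀ k : ℕ, Integrable (fun x => x ^ k * Real.exp (-x)) g) {M : ℝ} (hM : 0 ≤ M)
    (hgM : g (Set.Ioi M) ≠ 0) :
    Filter.Tendsto
      (fun k : ℕ =>
        (∫ x in Set.Ioi M, x ^ k * Real.exp (-x) ∂g) / (∫ x, x ^ k * Real.exp (-x) ∂g))
      Filter.atTop (nhds 1) := by
  have hexp : Integrable (fun x => Real.exp (-x)) g := by simpa using hint 0
  have hnonneg : ∀ᵐ x ∂g.tilted (-·), 0 ≤ x := (tilted_absolutelyContinuous g _).ae_le hg
  have hmoments (k : ℕ) : Integrable (fun x => x ^ k) (g.tilted (-·)) := by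
    simpa only [integrable_tilted_iff hexp, smul_eq_mul, mul_comm] using hint k
  have htail : g.tilted (-·) (Set.Ioi M) ≠ 0 := fun h => hgM (absolutelyContinuous_tilted hexp h)
  simp_rw [← setIntegral_tilted_div_integral_tilted hexp _ measurableSet_Ioi]
  exact tendsto_setIntegral_lt_pow_div_integral_pow hnonneg hmoments hM htail

/-- If the prior `g` on the Poisson rate is unbounded (puts positive mass beyond every `M > 0`),
then for every `M > 0` the posterior probability `P[λ > M | X = k]` tends to `1` as `k → ∞`. -/
theorem stmt16 (g : Measure ℝ) [IsProbabilityMeasure g] (hg : g (Set.Iio 0) = 0)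
    (hunb : ∀ M : ℝ, 0 < M → 0 < g (Set.Ioi M)) :
    ∀ M : ℝ, 0 < M →
      Filter.Tendsto
        (fun k : ℕ =>
          (∫ x in Set.Ioi M, x ^ k * Real.exp (-x) ∂g) /
            (∫ x, x ^ k * Real.exp (-x) ∂g))
        Filter.atTop (nhds 1) := by
  have hnonneg : ∀ᵐ x ∂g, 0 ≤ x := by simpa [ae_iff, Set.Iio_def] using hg
  exact fun M hM => stmt16_general g hnonneg (integrable_pow_mul_exp_neg hnonneg aemeasurable_id)
    hM.le (hunb M hM).ne'
end
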